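/- arXiv:1004.3220 — 2 statements merged into one kernel-verified Lean document; each statement's English description precedes it below -/
import Mathlib

section
/- For every n ≥ 1 and all nonnegative integers a, ℓ, m, the number of isomorphism classes of (2+2)-free posets P with |P| = n, levels(P) = a, minmax(P) = ℓ, and min(P) = m equals the number of ascent sequences of length n with exactly a ascents, last entry ℓ, and exactly m entries equal to 0. -/
/-!
Both sides count Fishburn multisets: finite multisets of pairs `(r, c)` with `r ≤ c < k` in which
every `r < k` and every `c < k` occurs, i.e. upper triangular matrices of natural numbers without
zero rows or columns.

In a (2+2)-free poset the strict down-sets form a chain. Sending `x` to the interval whose left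
end is the level of `x` and whose right end is the largest level of an element not above `x`
represents the poset by intervals, `x < y` meaning that the interval of `x` is to the left of that
of `y`, and every level is both a left end and a right end (`rep_of_free`). Such a reduced
representation is unique (`IntervalRep.unique`), so the multiset of intervals is a complete
isomorphism invariant, and every Fishburn multiset arises (`posetCount_eq`). The number of levels is
the dimension `k`, the minimal elements are the pairs in row `0`, and `minmax` is the index, the
smallest row meeting the last column.

Fishburn multisets of size `n + 1` are generated uniquely from those of size `n` by choosing
`i ≤ k`. If `i` is at most the index, the pair `(i, k - 1)` is added. Otherwise a row `i` and a
column `i - 1` are opened, the entries of the last column above row `i` move into the new column,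
and an entry is placed in the new row at the end. In either case the new index is `i`, and the
dimension grows exactly when `i` exceeds the old index. This is how an ascent sequence is
extended by a letter `i`, with the index as last letter and `k - 1` as the number of ascents. The
step can be undone because its kind is visible in the result: the row of the index has a single
entry exactly when that row was just opened (`Gen.injective`, `exists_gen`).
-/

/-!
STATEMENT 0: For every n ≥ 1 and all nonnegative integers a, ℓ, m, the number of
isomorphism classes of (2+2)-free posets P with |P| = n, levels(P) = a, minmax(P) = ℓ
and min(P) = m equals the number of ascent sequences of length n with exactly a ascents,
last entry ℓ, and exactly m entries equal to 0.
-/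

/-- Number of ascents of a finite sequence of naturals. -/
def ascents (l : List ℕ) : ℕ := (l.zip l.tail).countP fun p => decide (p.1 < p.2)

/-- `l` is an ascent sequence: `x₁ = 0` and `xᵢ ∈ [0, 1 + asc(x₁,…,x_{i-1})]`.
The empty sequence is an ascent sequence. -/
def IsAscentSeq (l : List ℕ) : Prop :=
  ∀ i (h : i < l.length), l.get ⟨i, h⟩ ≤ if i = 0 then 0 else ascents (l.take i) + 1

/-- A partial order is (2+2)-free: it contains no `a < b` and `c < d` with each of
`a, b` incomparable to each of `c, d`. -/
def TwoPlusTwoFree {α : Type*} (P : PartialOrder α) : Prop :=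
  ¬ ∃ a b c d : α, P.lt a b ∧ P.lt c d ∧
    (¬ P.le a c ∧ ¬ P.le c a) ∧ (¬ P.le a d ∧ ¬ P.le d a) ∧
    (¬ P.le b c ∧ ¬ P.le c b) ∧ (¬ P.le b d ∧ ¬ P.le d b)

/-- The strict down-set of `x`. -/
def downSet {α : Type*} (P : PartialOrder α) (x : α) : Set α := {y | P.lt y x}

/-- The collection of strict principal down-sets of a poset. -/
def downSets {α : Type*} (P : PartialOrder α) : Set (Set α) := Set.range (downSet P)

/-- `levels(P)`: one less than the number of distinct strict down-sets. -/
noncomputable def levelsStat {α : Type*} (P : PartialOrder α) : ℕ :=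
  Nat.card (downSets P) - 1

/-- The level of `x` in `P`: the index of `D(x)` in the chain of distinct strict
down-sets, i.e. the number of distinct strict down-sets strictly contained in `D(x)`. -/
noncomputable def levelOf {α : Type*} (P : PartialOrder α) (x : α) : ℕ :=
  Nat.card {S : Set α // S ∈ downSets P ∧ S ⊂ downSet P x}

/-- `x` is a maximal element of `P`. -/
def IsMaximalElt {α : Type*} (P : PartialOrder α) (x : α) : Prop := ∀ y, ¬ P.lt x y

/-- `minmax(P)`: the level of a maximal element whose strict down-set is smallest among
all maximal elements; since the down-sets form a chain in a (2+2)-free poset,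
this is the least level of a maximal element. -/
noncomputable def minmaxStat {α : Type*} (P : PartialOrder α) : ℕ :=
  sInf {k | ∃ x, IsMaximalElt P x ∧ levelOf P x = k}

/-- `min(P)`: the number of minimal elements of `P`. -/
noncomputable def minStat {α : Type*} (P : PartialOrder α) : ℕ :=
  Nat.card {x : α // ∀ y, ¬ P.lt y x}

/-- The number of isomorphism classes of (2+2)-free posets of size `n` with
`levels = a`, `minmax = ℓ` and `min = m`. -/
noncomputable def posetCount (n a ℓ m : ℕ) : ℕ :=
  Nat.card (Quot (fun (P Q : {P : PartialOrder (Fin n) //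
      TwoPlusTwoFree P ∧ levelsStat P = a ∧ minmaxStat P = ℓ ∧ minStat P = m}) =>
    ∃ e : Fin n ≃ Fin n, ∀ x y, P.val.le x y ↔ Q.val.le (e x) (e y)))


/-! ### Fishburn multisets -/

/-- A Fishburn multiset of dimension `k`: a finite multiset of pairs `(r, c)` with `r ≤ c < k` in
which every row `r < k` and every column `c < k` occurs. The multiplicities of the pairs are the
entries of an upper triangular `k × k` matrix with no zero row and no zero column. -/
structure Fish (k : ℕ) (S : Multiset (ℕ × ℕ)) : Prop where
  le : ∀ a b, (a, b) ∈ S → a ≤ b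
  lt : ∀ a b, (a, b) ∈ S → b < k
  row : ∀ j < k, ∃ b, (j, b) ∈ S
  col : ∀ j < k, ∃ a, (a, j) ∈ S

/-- `ℓ` is the smallest row meeting the last column `k - 1`. -/
def IsIdx (k : ℕ) (S : Multiset (ℕ × ℕ)) (ℓ : ℕ) : Prop :=
  (ℓ, k - 1) ∈ S ∧ ∀ a, (a, k - 1) ∈ S → ℓ ≤ a

lemma IsIdx.unique {k : ℕ} {S : Multiset (ℕ × ℕ)} {ℓ ℓ' : ℕ} (h : IsIdx k S ℓ)
    (h' : IsIdx k S ℓ') : ℓ = ℓ' :=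
  le_antisymm (h.2 _ h'.1) (h'.2 _ h.1)

lemma Fish.dim_unique {k k' : ℕ} {S : Multiset (ℕ × ℕ)} (h : Fish k S) (h' : Fish k' S) :
    k = k' := by
  rcases lt_trichotomy k k' with hk | hk | hk
  · obtain ⟨a, ha⟩ := h'.col _ hk
    exact absurd (h.lt _ _ ha) (lt_irrefl _)
  · exact hk
  · obtain ⟨a, ha⟩ := h.col _ hk
    exact absurd (h'.lt _ _ ha) (lt_irrefl _)

lemma Fish.exists_idx {k : ℕ} {S : Multiset (ℕ × ℕ)} (h : Fish k S) (hk : 0 < k) :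
    ∃ ℓ, IsIdx k S ℓ := by
  classical
  have hex := h.col (k - 1) (by omega)
  exact ⟨Nat.find hex, Nat.find_spec hex, fun a ha => Nat.find_min' hex ha⟩

/-- As entries lie on or above the diagonal, the last row can only meet the last column, in the
corner. -/
lemma Fish.corner {k : ℕ} {S : Multiset (ℕ × ℕ)} (h : Fish k S) (hk : 0 < k) :
    (k - 1, k - 1) ∈ S := by
  obtain ⟨b, hb⟩ := h.row (k - 1) (by omega)
  have h1 := h.le _ _ hb
  have h2 := h.lt _ _ hb
  obtain rfl : b = k - 1 := by omega
  exact hb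

/-- Opens a new row `i` and a new column `i - 1` in dimension `k`; the entries of the last column
lying above the new row move to the new column, and all other entries keep their relative place. -/
def shift (k i : ℕ) (p : ℕ × ℕ) : ℕ × ℕ :=
  (if p.1 < i then p.1 else p.1 + 1,
   if p.2 + 1 = k ∧ p.1 < i then i - 1 else if p.2 + 1 < i then p.2 else p.2 + 1)

/-- The inverse of `shift k i`: deletes row `i` and merges column `i - 1` into the last column. -/
def unshift (k i : ℕ) (p : ℕ × ℕ) : ℕ × ℕ :=
  (if p.1 < i then p.1 else p.1 - 1,
   if p.2 + 1 = i then k - 1 else if p.2 < i then p.2 else p.2 - 1)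

lemma unshift_shift {k i a b : ℕ} (hi : 1 ≤ i) (hik : i ≤ k) (hab : a ≤ b) :
    unshift k i (shift k i (a, b)) = (a, b) := by
  simp only [shift, unshift, Prod.mk.injEq]
  constructor <;> split_ifs <;> omega

lemma shift_unshift {k i a b : ℕ} (hi : 1 ≤ i) (hik : i ≤ k) (hab : a ≤ b) (hb : b ≤ k)
    (ha : a ≠ i) (hl : b = k → i < a) :
    shift k i (unshift k i (a, b)) = (a, b) := by
  simp only [shift, unshift, Prod.mk.injEq]
  constructor <;> split_ifs <;> omega

lemma fish_low {k : ℕ} {S : Multiset (ℕ × ℕ)} {i : ℕ} (h : Fish k S) (hi : i < k) :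
    Fish k ((i, k - 1) ::ₘ S) where
  le a b hab := by
    rcases Multiset.mem_cons.1 hab with e | e
    · simp only [Prod.mk.injEq] at e; omega
    · exact h.le _ _ e
  lt a b hab := by
    rcases Multiset.mem_cons.1 hab with e | e
    · simp only [Prod.mk.injEq] at e; omega
    · exact h.lt _ _ e
  row j hj := (h.row j hj).imp fun _ => Multiset.mem_cons_of_mem
  col j hj := (h.col j hj).imp fun _ => Multiset.mem_cons_of_mem

lemma idx_low {k : ℕ} {S : Multiset (ℕ × ℕ)} {i j : ℕ} (h : IsIdx k S j) (hi : i ≤ j) :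
    IsIdx k ((i, k - 1) ::ₘ S) i := by
  refine ⟨by simp, fun a ha => ?_⟩
  rcases Multiset.mem_cons.1 ha with e | e
  · simp only [Prod.mk.injEq] at e; omega
  · exact hi.trans (h.2 _ e)

lemma mem_shift {k i : ℕ} {S : Multiset (ℕ × ℕ)} {p : ℕ × ℕ} (h : p ∈ S.map (shift k i)) :
    ∃ a b, (a, b) ∈ S ∧ p = shift k i (a, b) := by
  obtain ⟨⟨a, b⟩, hm, rfl⟩ := Multiset.mem_map.1 h
  exact ⟨a, b, hm, rfl⟩

lemma fish_high {k : ℕ} {S : Multiset (ℕ × ℕ)} {i j : ℕ} (h : Fish k S) (hj : IsIdx k S j)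
    (hi : j < i) (hik : i ≤ k) :
    Fish (k + 1) ((i, k) ::ₘ S.map (shift k i)) where
  le a b hab := by
    rcases Multiset.mem_cons.1 hab with e | e
    · simp only [Prod.mk.injEq] at e; omega
    · obtain ⟨c, d, hm, e⟩ := mem_shift e
      have := h.le _ _ hm
      have := h.lt _ _ hm
      simp only [shift, Prod.mk.injEq] at e
      obtain ⟨rfl, rfl⟩ := e
      split_ifs <;> omega
  lt a b hab := by
    rcases Multiset.mem_cons.1 hab with e | e
    · simp only [Prod.mk.injEq] at e; omega
    · obtain ⟨c, d, hm, e⟩ := mem_shift e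
      have := h.le _ _ hm
      have := h.lt _ _ hm
      simp only [shift, Prod.mk.injEq] at e
      obtain ⟨rfl, rfl⟩ := e
      split_ifs <;> omega
  row r hr := by
    rcases lt_trichotomy r i with hri | rfl | hri
    · obtain ⟨b, hb⟩ := h.row r (by omega)
      refine ⟨(shift k i (r, b)).2, Multiset.mem_cons_of_mem (Multiset.mem_map.2 ⟨_, hb, ?_⟩)⟩
      simp [shift, hri]
    · exact ⟨k, Multiset.mem_cons_self _ _⟩
    · obtain ⟨b, hb⟩ := h.row (r - 1) (by omega)
      refine ⟨(shift k i (r - 1, b)).2,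
        Multiset.mem_cons_of_mem (Multiset.mem_map.2 ⟨_, hb, ?_⟩)⟩
      simp only [shift, Prod.mk.injEq, and_true]
      split_ifs <;> omega
  col c hc := by
    by_cases hck : c = k
    · subst hck; exact ⟨i, Multiset.mem_cons_self _ _⟩
    rcases lt_trichotomy (c + 1) i with hri | hri | hri
    · obtain ⟨a, ha⟩ := h.col c (by omega)
      refine ⟨(shift k i (a, c)).1, Multiset.mem_cons_of_mem (Multiset.mem_map.2 ⟨_, ha, ?_⟩)⟩
      simp only [shift, Prod.mk.injEq, true_and]
      split_ifs <;> omega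
    · refine ⟨(shift k i (j, k - 1)).1,
        Multiset.mem_cons_of_mem (Multiset.mem_map.2 ⟨_, hj.1, ?_⟩)⟩
      simp only [shift, Prod.mk.injEq, true_and]
      split_ifs <;> omega
    · obtain ⟨a, ha⟩ := h.col (c - 1) (by omega)
      refine ⟨(shift k i (a, c - 1)).1,
        Multiset.mem_cons_of_mem (Multiset.mem_map.2 ⟨_, ha, ?_⟩)⟩
      simp only [shift, Prod.mk.injEq, true_and]
      split_ifs <;> omega

lemma idx_high {k : ℕ} {S : Multiset (ℕ × ℕ)} {i : ℕ} (h : Fish k S) (hi : 1 ≤ i) (hik : i ≤ k) :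
    IsIdx (k + 1) ((i, k) ::ₘ S.map (shift k i)) i := by
  refine ⟨by simp, fun a ha => ?_⟩
  rcases Multiset.mem_cons.1 ha with e | e
  · simp only [Prod.mk.injEq] at e; omega
  · obtain ⟨c, d, hm, e⟩ := mem_shift e
    have := h.le _ _ hm
    have := h.lt _ _ hm
    simp only [shift, Prod.mk.injEq] at e
    obtain ⟨e1, e2⟩ := e
    split_ifs at e1 e2 <;> omega

lemma count_high {k : ℕ} {S : Multiset (ℕ × ℕ)} {i : ℕ} (hi : 1 ≤ i) :
    ((i, k) ::ₘ S.map (shift k i)).countP (fun p => p.1 = 0) = S.countP (fun p => p.1 = 0) := by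
  rw [Multiset.countP_cons_of_neg _ (by simp; omega), Multiset.countP_map,
    Multiset.countP_eq_card_filter]
  congr 1
  refine Multiset.filter_congr fun p _ => ?_
  by_cases hp : p.1 < i
  · simp [shift, hp]
  · have : p.1 ≠ 0 := by omega
    simp [shift, hp, this]

/-! ### The generating tree -/

/-- `Gen l k S`: the ascent sequence whose reversal is `l` builds the Fishburn multiset `S` of
dimension `k`. Appending a letter `i` to a sequence ending in `j` adds the pair `(i, k - 1)` if
`i ≤ j`, and otherwise opens a row with `shift k i` and puts a new entry at its end. -/
inductive Gen : List ℕ → ℕ → Multiset (ℕ × ℕ) → Prop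
  | base : Gen [0] 1 {(0, 0)}
  | low {i j : ℕ} {l : List ℕ} {k : ℕ} {S : Multiset (ℕ × ℕ)} (h : Gen (j :: l) k S)
      (hi : i ≤ j) : Gen (i :: j :: l) k ((i, k - 1) ::ₘ S)
  | high {i j : ℕ} {l : List ℕ} {k : ℕ} {S : Multiset (ℕ × ℕ)} (h : Gen (j :: l) k S)
      (hi : j < i) (hik : i ≤ k) : Gen (i :: j :: l) (k + 1) ((i, k) ::ₘ S.map (shift k i))

/-- The properties of a Fishburn multiset that are read off from a generating word. -/
lemma Gen.spec {l : List ℕ} {k : ℕ} {S : Multiset (ℕ × ℕ)} (h : Gen l k S) :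
    Fish k S ∧ (∀ i ∈ l.head?, IsIdx k S i) ∧ S.card = l.length ∧
      S.countP (fun p => p.1 = 0) = l.count 0 := by
  induction h with
  | base =>
    refine ⟨⟨?_, ?_, ?_, ?_⟩, ?_, rfl, rfl⟩ <;> simp [IsIdx]
  | @low i j l k S h hi ih =>
    obtain ⟨hF, hI, hc, h0⟩ := ih
    have hI := hI j rfl
    have hj := hF.le _ _ hI.1
    have hj' := hF.lt _ _ hI.1
    refine ⟨fish_low hF (by omega), ?_, by simp [hc], ?_⟩
    · rintro _ ⟨⟩
      exact idx_low hI hi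
    · rw [Multiset.countP_cons, List.count_cons, h0]
      simp
  | @high i j l k S h hi hik ih =>
    obtain ⟨hF, hI, hc, h0⟩ := ih
    have hI := hI j rfl
    refine ⟨fish_high hF hI hi hik, ?_, by simp [hc], ?_⟩
    · rintro _ ⟨⟩
      exact idx_high hF (by omega) hik
    · rw [count_high (by omega), h0, List.count_cons_of_ne (a := 0) (b := i) (by omega)]

lemma Gen.functional {l : List ℕ} {k k' : ℕ} {S S' : Multiset (ℕ × ℕ)} (h : Gen l k S)
    (h' : Gen l k' S') : k = k' ∧ S = S' := by
  induction h generalizing k' S' with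
  | base => cases h'; simp
  | low h hi ih =>
    cases h' with
    | low h' hi' => obtain ⟨rfl, rfl⟩ := ih h'; simp
    | high h' hi' => omega
  | high h hi hik ih =>
    cases h' with
    | low h' hi' => omega
    | high h' hi' => obtain ⟨rfl, rfl⟩ := ih h'; simp

lemma shift_fst_ne {k i : ℕ} {S : Multiset (ℕ × ℕ)} {b : ℕ} : (i, b) ∉ S.map (shift k i) := by
  intro h
  obtain ⟨c, d, hm, e⟩ := mem_shift h
  simp only [shift, Prod.mk.injEq] at e
  obtain ⟨e1, e2⟩ := e
  split_ifs at e1 <;> omega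

lemma map_unshift_shift {k i : ℕ} {S : Multiset (ℕ × ℕ)} (hF : Fish k S) (hi : 1 ≤ i)
    (hik : i ≤ k) : (S.map (shift k i)).map (unshift k i) = S := by
  rw [Multiset.map_map]
  conv_rhs => rw [← Multiset.map_id S]
  refine Multiset.map_congr rfl ?_
  rintro ⟨a, b⟩ hm
  exact unshift_shift hi hik (hF.le _ _ hm)

lemma Gen.inv {l : List ℕ} {k : ℕ} {S : Multiset (ℕ × ℕ)} (h : Gen l k S) :
    (l = [0] ∧ k = 1 ∧ S = {(0, 0)}) ∨
    (∃ i j l' S', l = i :: j :: l' ∧ Gen (j :: l') k S' ∧ i ≤ j ∧ S = (i, k - 1) ::ₘ S') ∨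
    (∃ i j l' k' S', l = i :: j :: l' ∧ Gen (j :: l') k' S' ∧ j < i ∧ i ≤ k' ∧ k = k' + 1 ∧
      S = (i, k') ::ₘ S'.map (shift k' i)) := by
  cases h with
  | base => exact Or.inl ⟨rfl, rfl, rfl⟩
  | low h hi => exact Or.inr (Or.inl ⟨_, _, _, _, rfl, h, hi, rfl⟩)
  | high h hi hik => exact Or.inr (Or.inr ⟨_, _, _, _, _, rfl, h, hi, hik, rfl, rfl⟩)

/-- The two kinds of step cannot produce the same multiset: a high step leaves a single entry in
the row of the index, a low step at least two. -/
lemma low_ne_high {k i : ℕ} {S S' : Multiset (ℕ × ℕ)} (hF : Fish (k + 1) S) (hi : i ≤ k)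
    (he : (i, k) ::ₘ S = (i, k) ::ₘ S'.map (shift k i)) : False := by
  rw [Multiset.cons_inj_right] at he
  obtain ⟨b, hb⟩ := hF.row i (by omega)
  rw [he] at hb
  exact shift_fst_ne hb

/-- A multiset determines its generating word: the last letter is the index, and the last step
opened a new row exactly when the row of the index has a single entry. -/
lemma Gen.injective {l l' : List ℕ} {k : ℕ} {S : Multiset (ℕ × ℕ)} (h : Gen l k S)
    (h' : Gen l' k S) : l = l' := by
  induction h generalizing l' with
  | base =>
    have hc := h'.spec.2.2.1
    rcases h'.inv with ⟨rfl, -, -⟩ | ⟨i, j, l, S, rfl, -⟩ | ⟨i, j, l, k', S, rfl, -⟩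
    · rfl
    · simp at hc
    · simp at hc
  | @low i j l k S h hi ih =>
    have hs := (Gen.low h hi).spec
    have hs' := h'.spec
    rcases h'.inv with ⟨rfl, -, -⟩ | ⟨i', j', l', S', rfl, g, hi', e⟩ |
      ⟨i', j', l', k', S', rfl, g, hi', hik, rfl, e⟩
    · have := hs.2.2.1
      have := hs'.2.2.1
      simp_all
    · obtain rfl := (hs.2.1 i rfl).unique (hs'.2.1 i' rfl)
      rw [Multiset.cons_inj_right] at e
      subst e
      rw [ih g]
    · obtain rfl := (hs.2.1 i rfl).unique (hs'.2.1 i' rfl)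
      exact (low_ne_high h.spec.1 hik e).elim
  | @high i j l k S h hi hik ih =>
    have hs := (Gen.high h hi hik).spec
    have hs' := h'.spec
    rcases h'.inv with ⟨rfl, -, -⟩ | ⟨i', j', l', S', rfl, g, hi', e⟩ |
      ⟨i', j', l', k', S', rfl, g, hi', hik', hk, e⟩
    · have := hs.2.2.1
      have := hs'.2.2.1
      simp_all
    · obtain rfl := (hs.2.1 i rfl).unique (hs'.2.1 i' rfl)
      exact (low_ne_high g.spec.1 hik e.symm).elim
    · obtain rfl := (hs.2.1 i rfl).unique (hs'.2.1 i' rfl)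
      obtain rfl : k = k' := by omega
      rw [Multiset.cons_inj_right] at e
      have e' := congrArg (Multiset.map (unshift k i)) e
      rw [map_unshift_shift h.spec.1 (by omega) hik,
        map_unshift_shift g.spec.1 (by omega) hik] at e'
      subst e'
      rw [ih g]

/-- Removing the entry at the index keeps a Fishburn multiset if its row has another entry. -/
lemma fish_erase {k i : ℕ} {S : Multiset (ℕ × ℕ)} (hF : Fish k ((i, k - 1) ::ₘ S))
    (hI : IsIdx k ((i, k - 1) ::ₘ S) i) (hrow : ∃ b, (i, b) ∈ S) : Fish k S := by
  obtain ⟨b₀, hb₀⟩ := hrow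
  have hik := hF.lt _ _ hI.1
  have hii := hF.le _ _ hI.1
  refine ⟨fun a b h => hF.le a b (Multiset.mem_cons_of_mem h),
    fun a b h => hF.lt a b (Multiset.mem_cons_of_mem h), fun j hj => ?_, fun j hj => ?_⟩
  · obtain ⟨b, hb⟩ := hF.row j hj
    rcases Multiset.mem_cons.1 hb with e | e
    · simp only [Prod.mk.injEq] at e
      obtain ⟨rfl, -⟩ := e
      exact ⟨_, hb₀⟩
    · exact ⟨_, e⟩
  · obtain ⟨b, hb⟩ := hF.col j hj
    rcases Multiset.mem_cons.1 hb with e | e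
    · simp only [Prod.mk.injEq] at e
      obtain ⟨-, rfl⟩ := e
      rcases Multiset.mem_cons.1 (hF.corner (by omega)) with e | e
      · simp only [Prod.mk.injEq] at e
        have := hF.le _ _ (Multiset.mem_cons_of_mem hb₀)
        have := hF.lt _ _ (Multiset.mem_cons_of_mem hb₀)
        obtain rfl : b₀ = k - 1 := by omega
        exact ⟨_, hb₀⟩
      · exact ⟨_, e⟩
    · exact ⟨_, e⟩

/-- Undoing a high step. -/
lemma exists_unshift {k i : ℕ} {S : Multiset (ℕ × ℕ)} (hF : Fish (k + 1) ((i, k) ::ₘ S))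
    (hI : IsIdx (k + 1) ((i, k) ::ₘ S) i) (hrow : ¬ ∃ b, (i, b) ∈ S) (hS : S ≠ 0) :
    ∃ S' j, Fish k S' ∧ IsIdx k S' j ∧ j < i ∧ i ≤ k ∧ S = S'.map (shift k i) := by
  have hik : i ≤ k := hF.le _ _ hI.1
  have hrow' : ∀ a b, (a, b) ∈ S → a ≠ i := by
    rintro a b h rfl
    exact hrow ⟨b, h⟩
  have hle : ∀ a b, (a, b) ∈ S → a ≤ b := fun a b h => hF.le a b (Multiset.mem_cons_of_mem h)
  have hlt : ∀ a b, (a, b) ∈ S → b ≤ k := fun a b h =>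
    Nat.lt_succ_iff.1 (hF.lt a b (Multiset.mem_cons_of_mem h))
  have hlast : ∀ a b, (a, b) ∈ S → b = k → i < a := by
    rintro a b h rfl
    exact lt_of_le_of_ne (hI.2 a (Multiset.mem_cons_of_mem h)) (hrow' a b h).symm
  have hR : ∀ j ≤ k, j ≠ i → ∃ b, (j, b) ∈ S := by
    intro j hj hji
    obtain ⟨b, hb⟩ := hF.row j (by omega)
    rcases Multiset.mem_cons.1 hb with e | e
    · simp only [Prod.mk.injEq] at e; omega
    · exact ⟨_, e⟩
  have hC : ∀ j < k, ∃ b, (b, j) ∈ S := by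
    intro j hj
    obtain ⟨b, hb⟩ := hF.col j (by omega)
    rcases Multiset.mem_cons.1 hb with e | e
    · simp only [Prod.mk.injEq] at e; omega
    · exact ⟨_, e⟩
  have hi1 : 1 ≤ i := by
    by_contra h0
    obtain rfl : i = 0 := by omega
    rcases Nat.eq_zero_or_pos k with rfl | hk
    · obtain ⟨⟨a, b⟩, hp⟩ := Multiset.exists_mem_of_ne_zero hS
      have := hle _ _ hp
      have := hlt _ _ hp
      have := hrow' _ _ hp
      omega
    · obtain ⟨b, hb⟩ := hC 0 hk
      have := hle _ _ hb
      have := hrow' _ _ hb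
      omega
  have hm : ∀ a b, (a, b) ∈ S.map (unshift k i) →
      ∃ c d, (c, d) ∈ S ∧ a = (unshift k i (c, d)).1 ∧ b = (unshift k i (c, d)).2 := by
    intro a b h
    obtain ⟨⟨c, d⟩, hm, e⟩ := Multiset.mem_map.1 h
    exact ⟨c, d, hm, by rw [e], by rw [e]⟩
  have hmem : ∀ c d, (c, d) ∈ S → unshift k i (c, d) ∈ S.map (unshift k i) :=
    fun c d h => Multiset.mem_map_of_mem _ h
  have hF' : Fish k (S.map (unshift k i)) := by
    refine ⟨?_, ?_, ?_, ?_⟩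
    · intro a b h
      obtain ⟨c, d, h', rfl, rfl⟩ := hm a b h
      have := hle _ _ h'
      have := hlt _ _ h'
      have := hrow' _ _ h'
      have := hlast _ _ h'
      simp only [unshift]
      split_ifs <;> omega
    · intro a b h
      obtain ⟨c, d, h', rfl, rfl⟩ := hm a b h
      have := hle _ _ h'
      have := hlt _ _ h'
      have := hrow' _ _ h'
      have := hlast _ _ h'
      simp only [unshift]
      split_ifs <;> omega
    · intro j hj
      by_cases hji : j < i
      · obtain ⟨b, hb⟩ := hR j (by omega) (by omega)
        have := hmem _ _ hb
        simp only [unshift, if_pos hji] at this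
        exact ⟨_, this⟩
      · obtain ⟨b, hb⟩ := hR (j + 1) (by omega) (by omega)
        have := hmem _ _ hb
        simp only [unshift, if_neg (show ¬ (j + 1 < i) by omega), Nat.add_sub_cancel] at this
        exact ⟨_, this⟩
    · intro j hj
      by_cases hjk : j = k - 1
      · obtain ⟨a, ha⟩ := hC (i - 1) (by omega)
        have := hmem _ _ ha
        simp only [unshift, if_pos (show i - 1 + 1 = i by omega)] at this
        exact ⟨_, hjk ▸ this⟩
      by_cases hji : j + 1 < i
      · obtain ⟨a, ha⟩ := hC j (by omega)
        have := hmem _ _ ha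
        simp only [unshift, if_neg (show ¬ (j + 1 = i) by omega),
          if_pos (show j < i by omega)] at this
        exact ⟨_, this⟩
      · obtain ⟨a, ha⟩ := hC (j + 1) (by omega)
        have := hmem _ _ ha
        simp only [unshift, if_neg (show ¬ (j + 1 + 1 = i) by omega),
          if_neg (show ¬ (j + 1 < i) by omega), Nat.add_sub_cancel] at this
        exact ⟨_, this⟩
  obtain ⟨j, hj⟩ := hF'.exists_idx (by omega)
  refine ⟨_, j, hF', hj, ?_, hik, ?_⟩
  · obtain ⟨a, ha⟩ := hC (i - 1) (by omega)
    have h1 := hle _ _ ha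
    have := hmem _ _ ha
    simp only [unshift, if_pos (show i - 1 + 1 = i by omega),
      if_pos (show a < i by omega)] at this
    have := hj.2 _ this
    omega
  · rw [Multiset.map_map]
    conv_lhs => rw [← Multiset.map_id S]
    refine (Multiset.map_congr rfl ?_).symm
    rintro ⟨a, b⟩ h
    exact shift_unshift hi1 hik (hle _ _ h) (hlt _ _ h) (hrow' _ _ h) (hlast _ _ h)

/-- Every nonempty Fishburn multiset is generated. -/
lemma exists_gen (n : ℕ) : ∀ (k : ℕ) (S : Multiset (ℕ × ℕ)), S.card = n + 1 → Fish k S →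
    ∃ l, Gen l k S := by
  induction n with
  | zero =>
    intro k S hS hF
    obtain ⟨⟨a, b⟩, rfl⟩ := Multiset.card_eq_one.1 hS
    have h1 := hF.le a b (by simp)
    have h2 := hF.lt a b (by simp)
    obtain ⟨c, hc⟩ := hF.row 0 (by omega)
    have hc' := hF.corner (by omega)
    simp only [Multiset.mem_singleton, Prod.mk.injEq] at hc hc'
    obtain ⟨rfl, rfl⟩ := hc
    obtain rfl : c = 0 := by omega
    obtain rfl : k = 1 := by omega
    exact ⟨_, Gen.base⟩
  | succ n ih =>
    intro k S hS hF
    have hk : 0 < k := by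
      obtain ⟨⟨a, b⟩, h⟩ := Multiset.exists_mem_of_ne_zero (s := S) (by rintro rfl; simp at hS)
      exact Nat.zero_lt_of_lt (hF.lt _ _ h)
    obtain ⟨i, hI⟩ := hF.exists_idx hk
    obtain ⟨S, rfl⟩ := Multiset.exists_cons_of_mem hI.1
    rw [Multiset.card_cons] at hS
    have hcard : S.card = n + 1 := by omega
    by_cases hrow : ∃ b, (i, b) ∈ S
    · have hF' := fish_erase hF hI hrow
      obtain ⟨l, hl⟩ := ih k S hcard hF'
      have hs := hl.spec
      match l, hl, hs with
      | [], _, hs => have := hs.2.2.1; simp at this; simp [this] at hcard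
      | j :: l, hl, hs =>
        exact ⟨_, Gen.low hl (hI.2 j (Multiset.mem_cons_of_mem (hs.2.1 j rfl).1))⟩
    · obtain ⟨k, rfl⟩ : ∃ k', k = k' + 1 := ⟨k - 1, by omega⟩
      obtain ⟨S', j, hF', hj, hji, hik, rfl⟩ := exists_unshift hF hI hrow
        (by rintro rfl; simp at hcard)
      obtain ⟨l, hl⟩ := ih k S' (by simpa using hcard) hF'
      have hs := hl.spec
      match l, hl, hs with
      | [], _, hs => have := hs.2.2.1; simp at this; simp [this] at hcard
      | j' :: l, hl, hs =>
        obtain rfl := (hs.2.1 j' rfl).unique hj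
        exact ⟨_, Gen.high hl hji hik⟩

/-! ### Ascent sequences -/

lemma ascents_concat (l : List ℕ) (j i : ℕ) :
    ascents (l ++ [j, i]) = ascents (l ++ [j]) + if j < i then 1 else 0 := by
  induction l with
  | nil => simp [ascents, List.countP_cons]
  | cons x l ih =>
    match l, ih with
    | [], _ => simp only [ascents, List.nil_append, List.cons_append, List.tail_cons,
        List.zip_cons_cons, List.zip_nil_right, List.countP_cons, List.countP_nil,
        decide_eq_true_eq]; omega
    | y :: l, ih =>
      simp only [ascents, List.cons_append, List.tail_cons, List.zip_cons_cons,
        List.countP_cons] at ih ⊢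
      omega

lemma isAscentSeq_concat (l : List ℕ) (i : ℕ) :
    IsAscentSeq (l ++ [i]) ↔ IsAscentSeq l ∧ i ≤ if l = [] then 0 else ascents l + 1 := by
  constructor
  · intro h
    refine ⟨fun t ht => ?_, ?_⟩
    · have := h t (by simp; omega)
      simpa [List.getElem_append_left ht, List.take_append_of_le_length ht.le] using this
    · have := h l.length (by simp)
      simpa using this
  · rintro ⟨h, hi⟩ t ht
    rcases Nat.lt_or_ge t l.length with hl | hl
    · have := h t hl
      simpa [List.getElem_append_left hl, List.take_append_of_le_length hl.le] using this
    · obtain rfl : t = l.length := by simp at ht; omega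
      simpa using hi

/-- The reversal of a generating word is an ascent sequence, and the dimension is one more than the
number of ascents. -/
lemma Gen.isAscentSeq {l : List ℕ} {k : ℕ} {S : Multiset (ℕ × ℕ)} (h : Gen l k S) :
    IsAscentSeq l.reverse ∧ k = ascents l.reverse + 1 := by
  induction h with
  | base =>
    refine ⟨?_, by simp [ascents]⟩
    have := (isAscentSeq_concat [] 0).2 ⟨fun i h => by simp at h, by simp⟩
    simpa using this
  | @low i j l k S h hi ih =>
    obtain ⟨h1, h2⟩ := ih
    refine ⟨?_, ?_⟩
    · rw [List.reverse_cons, isAscentSeq_concat, if_neg (by simp)]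
      have := h.spec.1.le _ _ (h.spec.2.1 j rfl).1
      exact ⟨h1, by omega⟩
    · have := ascents_concat l.reverse j i
      rw [if_neg (by omega)] at this
      simp only [List.reverse_cons, List.append_assoc, List.cons_append, List.nil_append] at h2 ⊢
      omega
  | @high i j l k S h hi hik ih =>
    obtain ⟨h1, h2⟩ := ih
    refine ⟨?_, ?_⟩
    · rw [List.reverse_cons, isAscentSeq_concat, if_neg (by simp)]
      exact ⟨h1, by omega⟩
    · have := ascents_concat l.reverse j i
      rw [if_pos hi] at this
      simp only [List.reverse_cons, List.append_assoc, List.cons_append, List.nil_append] at h2 ⊢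
      omega

/-- Conversely, every nonempty ascent sequence is the reversal of a generating word. -/
lemma exists_gen_of_isAscentSeq (l : List ℕ) (hl : l ≠ []) (h : IsAscentSeq l.reverse) :
    ∃ k S, Gen l k S := by
  induction l with
  | nil => exact absurd rfl hl
  | cons i l ih =>
    rw [List.reverse_cons, isAscentSeq_concat] at h
    obtain ⟨h1, h2⟩ := h
    match l, ih, h1, h2 with
    | [], _, _, h2 =>
      obtain rfl : i = 0 := by simpa using h2
      exact ⟨_, _, Gen.base⟩
    | j :: l, ih, h1, h2 =>
      obtain ⟨k, S, hg⟩ := ih (by simp) h1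
      rw [if_neg (by simp), ← hg.isAscentSeq.2] at h2
      rcases Nat.lt_or_ge j i with hji | hji
      · exact ⟨_, _, Gen.high hg hji h2⟩
      · exact ⟨_, _, Gen.low hg hji⟩

/-- Ascent sequences are equinumerous with Fishburn multisets, with matching statistics. -/
lemma card_ascentSeq (n a ℓ m : ℕ) (hn : 1 ≤ n) :
    Nat.card {l : List ℕ // IsAscentSeq l ∧ l.length = n ∧ ascents l = a ∧
        l.getLast? = some ℓ ∧ l.count 0 = m} =
      Nat.card {S : Multiset (ℕ × ℕ) // Fish (a + 1) S ∧ S.card = n ∧ IsIdx (a + 1) S ℓ ∧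
        S.countP (fun p => p.1 = 0) = m} := by
  have key : ∀ S : {S : Multiset (ℕ × ℕ) // Fish (a + 1) S ∧ S.card = n ∧ IsIdx (a + 1) S ℓ ∧
      S.countP (fun p => p.1 = 0) = m}, ∃ l, Gen l (a + 1) S.1 := fun S =>
    exists_gen (n - 1) _ _ (by have := S.2.2.1; omega) S.2.1
  choose f hf using key
  symm
  refine Nat.card_eq_of_bijective (fun S => ⟨(f S).reverse, (hf S).isAscentSeq.1, ?_, ?_, ?_, ?_⟩)
    ⟨?_, ?_⟩
  · rw [List.length_reverse, ← (hf S).spec.2.2.1, S.2.2.1]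
  · have := (hf S).isAscentSeq.2
    omega
  · rw [List.getLast?_reverse]
    have hs := (hf S).spec
    cases hc : f S with
    | nil => have := hs.2.2.1; rw [S.2.2.1, hc] at this; simp at this; omega
    | cons i l =>
      rw [hc] at hs
      simp [(hs.2.1 i rfl).unique S.2.2.2.1]
  · rw [List.count_reverse, ← (hf S).spec.2.2.2, S.2.2.2.2]
  · intro S T h
    have h : f S = f T := by simpa using h
    have hT := hf T
    rw [← h] at hT
    exact Subtype.ext ((hf S).functional hT).2
  · rintro ⟨l, h, hlen, ha, hlast, hz⟩
    obtain ⟨k, S, hg⟩ := exists_gen_of_isAscentSeq l.reverse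
      (by rintro h; simp at h; simp [h] at hlen; omega) (by simpa using h)
    have hk := hg.isAscentSeq.2
    rw [List.reverse_reverse, ha] at hk
    subst hk
    have hs := hg.spec
    have hS : Fish (a + 1) S ∧ S.card = n ∧ IsIdx (a + 1) S ℓ ∧
        S.countP (fun p => p.1 = 0) = m := by
      refine ⟨hs.1, by simpa [hlen] using hs.2.2.1, hs.2.1 ℓ ?_, ?_⟩
      · simp [List.head?_reverse, hlast]
      · rw [hs.2.2.2, List.count_reverse, hz]
    refine ⟨⟨S, hS⟩, Subtype.ext ?_⟩
    have := (hf ⟨S, hS⟩).injective hg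
    simp [this]

/-! ### Interval representations of posets -/

/-- A reduced interval representation of `P` of dimension `k`: each `x` is assigned an interval
`[L x, U x]` with ends below `k`, `x < y` means that the interval of `x` lies to the left of that
of `y`, and every number below `k` is both a left end and a right end. -/
structure IntervalRep {n : ℕ} (P : PartialOrder (Fin n)) (k : ℕ) (L U : Fin n → ℕ) : Prop where
  lt_iff : ∀ x y, P.lt x y ↔ U x < L y
  le : ∀ x, L x ≤ U x
  lt : ∀ x, U x < k
  row : ∀ j < k, ∃ x, L x = j
  col : ∀ j < k, ∃ x, U x = j

/-- The multiset of intervals of a representation. -/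
def code {n : ℕ} (L U : Fin n → ℕ) : Multiset (ℕ × ℕ) :=
  Finset.univ.val.map fun x => (L x, U x)

lemma mem_code {n : ℕ} {L U : Fin n → ℕ} {a b : ℕ} :
    (a, b) ∈ code L U ↔ ∃ x, L x = a ∧ U x = b := by
  simp [code]

lemma IntervalRep.fish {n : ℕ} {P : PartialOrder (Fin n)} {k : ℕ} {L U : Fin n → ℕ}
    (h : IntervalRep P k L U) : Fish k (code L U) where
  le a b hab := by obtain ⟨x, rfl, rfl⟩ := mem_code.1 hab; exact h.le x
  lt a b hab := by obtain ⟨x, rfl, rfl⟩ := mem_code.1 hab; exact h.lt x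
  row j hj := by obtain ⟨x, hx⟩ := h.row j hj; exact ⟨_, mem_code.2 ⟨x, hx, rfl⟩⟩
  col j hj := by obtain ⟨x, hx⟩ := h.col j hj; exact ⟨_, mem_code.2 ⟨x, rfl, hx⟩⟩

lemma IntervalRep.downSet_eq {n : ℕ} {P : PartialOrder (Fin n)} {k : ℕ} {L U : Fin n → ℕ}
    (h : IntervalRep P k L U) (x : Fin n) : downSet P x = {y | U y < L x} := by
  ext y
  exact h.lt_iff y x

lemma IntervalRep.strictMonoOn {n : ℕ} {P : PartialOrder (Fin n)} {k : ℕ} {L U : Fin n → ℕ}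
    (h : IntervalRep P k L U) : StrictMonoOn (fun j => {y | U y < j}) (Set.Iio k) := by
  intro i hi j hj hij
  refine ⟨fun y (hy : U y < i) => show U y < j by omega, fun hs => ?_⟩
  obtain ⟨z, hz⟩ := h.col i hi
  have : U z < i := hs (show U z < j by omega)
  omega

lemma IntervalRep.downSets_eq {n : ℕ} {P : PartialOrder (Fin n)} {k : ℕ} {L U : Fin n → ℕ}
    (h : IntervalRep P k L U) : downSets P = (fun j => {y | U y < j}) '' Set.Iio k := by
  ext S
  constructor
  · rintro ⟨x, rfl⟩
    exact ⟨L x, (h.le x).trans_lt (h.lt x), (h.downSet_eq x).symm⟩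
  · rintro ⟨j, hj, rfl⟩
    obtain ⟨x, rfl⟩ := h.row j hj
    exact ⟨x, h.downSet_eq x⟩

lemma IntervalRep.card_downSets {n : ℕ} {P : PartialOrder (Fin n)} {k : ℕ} {L U : Fin n → ℕ}
    (h : IntervalRep P k L U) : Nat.card (downSets P) = k := by
  rw [h.downSets_eq, Nat.card_image_of_injOn h.strictMonoOn.injOn]
  simp

lemma IntervalRep.levelOf_eq {n : ℕ} {P : PartialOrder (Fin n)} {k : ℕ} {L U : Fin n → ℕ}
    (h : IntervalRep P k L U) (x : Fin n) : levelOf P x = L x := by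
  have hx : L x < k := (h.le x).trans_lt (h.lt x)
  have : {S : Set (Fin n) | S ∈ downSets P ∧ S ⊂ downSet P x} =
      (fun j => {y | U y < j}) '' Set.Iio (L x) := by
    rw [h.downSets_eq, h.downSet_eq]
    ext S
    constructor
    · rintro ⟨⟨j, hj, rfl⟩, hS⟩
      exact ⟨j, (h.strictMonoOn.lt_iff_lt hj hx).1 hS, rfl⟩
    · rintro ⟨j, hj, rfl⟩
      have hj : j < L x := hj
      have hjk : j ∈ Set.Iio k := hj.trans hx
      exact ⟨⟨j, hjk, rfl⟩, h.strictMonoOn hjk hx hj⟩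
  change Nat.card {S : Set (Fin n) | S ∈ downSets P ∧ S ⊂ downSet P x} = L x
  rw [this, Nat.card_image_of_injOn (h.strictMonoOn.injOn.mono
    (Set.Iio_subset_Iio hx.le))]
  simp

/-- The right ends are determined by the left ends: `U x` is the largest `L y` with `x ≮ y`. -/
lemma IntervalRep.unique {n : ℕ} {P : PartialOrder (Fin n)} {k k' : ℕ} {L U L' U' : Fin n → ℕ}
    (h : IntervalRep P k L U) (h' : IntervalRep P k' L' U') : L = L' ∧ U = U' := by
  have hL : L = L' := funext fun x => by rw [← h.levelOf_eq x, h'.levelOf_eq x]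
  subst hL
  refine ⟨rfl, funext fun x => le_antisymm ?_ ?_⟩
  · obtain ⟨y, hy⟩ := h.row _ (h.lt x)
    by_contra hlt
    have := (h.lt_iff x y).1 ((h'.lt_iff x y).2 (by omega))
    omega
  · obtain ⟨y, hy⟩ := h'.row _ (h'.lt x)
    by_contra hlt
    have := (h'.lt_iff x y).1 ((h.lt_iff x y).2 (by omega))
    omega

lemma IntervalRep.isMaximalElt_iff {n : ℕ} {P : PartialOrder (Fin n)} {k : ℕ} {L U : Fin n → ℕ}
    (h : IntervalRep P k L U) (x : Fin n) : IsMaximalElt P x ↔ U x = k - 1 := by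
  have hx := h.lt x
  constructor
  · intro hm
    obtain ⟨y, hy⟩ := h.row (k - 1) (by omega)
    have := mt (h.lt_iff x y).2 (hm y)
    omega
  · intro hU y hy
    have := (h.lt_iff x y).1 hy
    have := h.le y
    have := h.lt y
    omega

lemma IntervalRep.minmax_isIdx {n : ℕ} {P : PartialOrder (Fin n)} {k : ℕ} {L U : Fin n → ℕ}
    (h : IntervalRep P k L U) (hk : 0 < k) : IsIdx k (code L U) (minmaxStat P) := by
  have hne : {j | ∃ x, IsMaximalElt P x ∧ levelOf P x = j}.Nonempty := by
    obtain ⟨x, hx⟩ := h.col (k - 1) (by omega)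
    exact ⟨_, x, (h.isMaximalElt_iff x).2 hx, rfl⟩
  refine ⟨?_, fun a ha => ?_⟩
  · obtain ⟨x, hx, hl⟩ := Nat.sInf_mem hne
    exact mem_code.2 ⟨x, by rw [← h.levelOf_eq, hl]; rfl, (h.isMaximalElt_iff x).1 hx⟩
  · obtain ⟨x, rfl, hx⟩ := mem_code.1 ha
    exact Nat.sInf_le ⟨x, (h.isMaximalElt_iff x).2 hx, h.levelOf_eq x⟩

lemma IntervalRep.minStat_eq {n : ℕ} {P : PartialOrder (Fin n)} {k : ℕ} {L U : Fin n → ℕ}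
    (h : IntervalRep P k L U) : minStat P = (code L U).countP (fun p => p.1 = 0) := by
  have : ∀ x, (∀ y, ¬ P.lt y x) ↔ L x = 0 := by
    intro x
    constructor
    · intro hx
      have h1 := h.le x
      have h2 := h.lt x
      obtain ⟨y, hy⟩ := h.col 0 (by omega)
      have := mt (h.lt_iff y x).2 (hx y)
      omega
    · intro hx y hy
      have := (h.lt_iff y x).1 hy
      omega
  unfold minStat
  simp_rw [this]
  rw [code, Multiset.countP_map, Nat.card_eq_fintype_card, Fintype.card_subtype]
  rfl

/-! ### Every (2+2)-free poset has a reduced representation -/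

section Exists

variable {n : ℕ} {P : PartialOrder (Fin n)}

lemma downSet_total {α : Type*} {P : PartialOrder α} (h : TwoPlusTwoFree P) (x y : α) :
    downSet P x ⊆ downSet P y ∨ downSet P y ⊆ downSet P x := by
  by_contra hc
  rw [not_or, Set.not_subset, Set.not_subset] at hc
  obtain ⟨⟨a, hax, hay⟩, ⟨b, hby, hbx⟩⟩ := hc
  change a < x at hax
  change ¬ a < y at hay
  change b < y at hby
  change ¬ b < x at hbx
  refine h ⟨a, x, b, y, hax, hby, ⟨fun e => ?_, fun e => ?_⟩, ⟨fun e => ?_, fun e => ?_⟩,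
    ⟨fun e => ?_, fun e => ?_⟩, ⟨fun e => ?_, fun e => ?_⟩⟩
  · exact hay (lt_of_le_of_lt e hby)
  · exact hbx (lt_of_le_of_lt e hax)
  · rcases lt_or_eq_of_le (show a ≤ y from e) with e | e
    · exact hay e
    · exact hbx (hby.trans (e ▸ hax))
  · exact hbx (hby.trans (lt_of_le_of_lt (show y ≤ a from e) hax))
  · exact hay (hax.trans (lt_of_le_of_lt (show x ≤ b from e) hby))
  · rcases lt_or_eq_of_le (show b ≤ x from e) with e | e
    · exact hbx e
    · exact hay (hax.trans (e ▸ hby))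
  · exact hay (lt_of_lt_of_le hax (show x ≤ y from e))
  · exact hbx (lt_of_lt_of_le hby (show y ≤ x from e))

lemma exists_isMaximalElt {α : Type*} [Finite α] [Nonempty α] (P : PartialOrder α) :
    ∃ x, IsMaximalElt P x := by
  obtain ⟨x, hx⟩ := (Set.toFinite (Set.univ : Set α)).exists_maximal Set.univ_nonempty
  exact ⟨x, fun y hy => hx.not_gt trivial hy⟩

lemma levelOf_mono {x y : Fin n} (h : downSet P x ⊆ downSet P y) : levelOf P x ≤ levelOf P y :=
  Nat.card_mono (s := {S | S ∈ downSets P ∧ S ⊂ downSet P x})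
    (t := {S | S ∈ downSets P ∧ S ⊂ downSet P y}) (Set.toFinite _)
    fun _ hS => ⟨hS.1, hS.2.trans_subset h⟩

lemma levelOf_strictMono {x y : Fin n} (h : downSet P x ⊂ downSet P y) :
    levelOf P x < levelOf P y := by
  have : {S | S ∈ downSets P ∧ S ⊂ downSet P x} ⊂ {S | S ∈ downSets P ∧ S ⊂ downSet P y} :=
    ⟨fun S hS => ⟨hS.1, hS.2.trans h⟩, fun hs => (hs ⟨⟨x, rfl⟩, h⟩).2.ne rfl⟩
  exact Set.ncard_lt_ncard this (Set.toFinite _)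

lemma levelOf_lt (x : Fin n) : levelOf P x < Nat.card (downSets P) := by
  have : {S | S ∈ downSets P ∧ S ⊂ downSet P x} ⊂ downSets P :=
    ⟨fun S hS => hS.1, fun hs => (hs (⟨x, rfl⟩ : downSet P x ∈ downSets P)).2.ne rfl⟩
  exact Set.ncard_lt_ncard this (Set.toFinite _)

lemma levelOf_lt_iff (h : TwoPlusTwoFree P) {x y : Fin n} :
    levelOf P x < levelOf P y ↔ downSet P x ⊂ downSet P y := by
  refine ⟨fun hl => ?_, levelOf_strictMono⟩
  have h1 : ¬ downSet P y ⊆ downSet P x := fun hs => (levelOf_mono hs).not_gt hl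
  exact ⟨(downSet_total h x y).resolve_right h1, h1⟩

/-- Levels are ranks in a finite chain, so every number below the length of the chain is a level. -/
lemma exists_levelOf (h : TwoPlusTwoFree P) {j : ℕ} (hj : j < Nat.card (downSets P)) :
    ∃ x, levelOf P x = j := by
  classical
  choose r hr using fun S : downSets P => S.2
  let f : downSets P → Fin (Nat.card (downSets P)) := fun S => ⟨levelOf P (r S), levelOf_lt _⟩
  have hf : Function.Injective f := by
    intro S T hST
    have e : levelOf P (r S) = levelOf P (r T) := congrArg Fin.val hST
    have h1 : ¬ downSet P (r S) ⊂ downSet P (r T) := fun hs => (levelOf_strictMono hs).ne e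
    have h2 : ¬ downSet P (r T) ⊂ downSet P (r S) := fun hs => (levelOf_strictMono hs).ne e.symm
    apply Subtype.ext
    rw [← hr S, ← hr T]
    rcases downSet_total h (r S) (r T) with hs | hs
    · exact hs.antisymm (not_not.1 fun hn => h1 ⟨hs, hn⟩)
    · exact (hs.antisymm (not_not.1 fun hn => h2 ⟨hs, hn⟩)).symm
  have hb : Function.Bijective f := (Nat.bijective_iff_injective_and_card f).2 ⟨hf, by simp⟩
  obtain ⟨S, hS⟩ := hb.2 ⟨j, hj⟩
  exact ⟨r S, congrArg Fin.val hS⟩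

open Classical in
/-- The largest level of an element that is not above `x`. -/
noncomputable def upLevel (P : PartialOrder (Fin n)) (x : Fin n) : ℕ :=
  (Finset.univ.filter fun y => ¬ P.lt x y).sup (levelOf P)

lemma le_upLevel {x y : Fin n} (h : ¬ P.lt x y) : levelOf P y ≤ upLevel P x := by
  classical
  exact Finset.le_sup (f := levelOf P) (by simpa using h)

lemma exists_upLevel (x : Fin n) : ∃ y, ¬ P.lt x y ∧ levelOf P y = upLevel P x := by
  classical
  have hx : x ∈ Finset.univ.filter fun y => ¬ P.lt x y := by
    simp
  obtain ⟨y, hy, e⟩ := Finset.exists_mem_eq_sup _ ⟨x, hx⟩ (levelOf P)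
  exact ⟨y, by simpa using hy, by rw [upLevel, e]⟩

lemma rep_of_free (h : TwoPlusTwoFree P) :
    IntervalRep P (Nat.card (downSets P)) (levelOf P) (upLevel P) where
  lt_iff x y := by
    constructor
    · intro hxy
      obtain ⟨z, hz, e⟩ := exists_upLevel (P := P) x
      have h1 : ¬ downSet P y ⊆ downSet P z := fun hs => hz (hs hxy)
      rw [← e]
      exact levelOf_strictMono ⟨(downSet_total h z y).resolve_right h1, h1⟩
    · intro hl
      by_contra hxy
      exact (le_upLevel hxy).not_gt hl
  le x := le_upLevel (@lt_irrefl _ P.toPreorder x)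
  lt x := by
    obtain ⟨y, -, e⟩ := exists_upLevel (P := P) x
    rw [← e]
    exact levelOf_lt y
  row j hj := exists_levelOf h hj
  col j hj := by
    obtain ⟨z, hz⟩ := exists_levelOf h hj
    -- It suffices to find `x` not below `z` but below every element of level above `j`.
    suffices hx : ∃ x, ¬ P.lt x z ∧ ∀ w, j < levelOf P w → P.lt x w by
      obtain ⟨x, hxz, hw⟩ := hx
      refine ⟨x, le_antisymm ?_ (hz ▸ le_upLevel hxz)⟩
      obtain ⟨y, hy, e⟩ := exists_upLevel (P := P) x
      rw [← e]
      exact not_lt.1 fun hj => hy (hw y hj)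
    by_cases hj' : j + 1 < Nat.card (downSets P)
    · obtain ⟨w, hw⟩ := exists_levelOf h hj'
      have hs := (levelOf_lt_iff h).1 (show levelOf P z < levelOf P w by omega)
      obtain ⟨x, hxw, hxz⟩ := Set.exists_of_ssubset hs
      refine ⟨x, hxz, fun v hv => ?_⟩
      rcases downSet_total h w v with hwv | hvw
      · exact hwv hxw
      · by_contra hxv
        have := levelOf_strictMono ⟨hvw, fun hs => hxv (hs hxw)⟩
        omega
    · have : Nonempty (Fin n) := ⟨z⟩
      obtain ⟨x, hx⟩ := exists_isMaximalElt P
      refine ⟨x, hx z, fun w hw => ?_⟩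
      have := levelOf_lt (P := P) w
      omega

end Exists

/-! ### Posets from Fishburn multisets, and isomorphism -/

/-- The poset of the intervals `[L x, U x]` under the left-of order. -/
@[reducible] def intervalOrder {n : ℕ} (L U : Fin n → ℕ) (h : ∀ x, L x ≤ U x) :
    PartialOrder (Fin n) where
  le x y := x = y ∨ U x < L y
  lt x y := U x < L y
  le_refl x := Or.inl rfl
  le_trans x y z hxy hyz := by
    have := h y
    rcases hxy with rfl | hxy
    · exact hyz
    · rcases hyz with rfl | hyz
      · exact Or.inr hxy
      · exact Or.inr (by omega)
  lt_iff_le_not_ge x y := by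
    have hx := h x
    have hy := h y
    constructor
    · intro hl
      refine ⟨Or.inr hl, ?_⟩
      rintro (rfl | hl') <;> omega
    · rintro ⟨rfl | hl, hn⟩
      · exact absurd (Or.inl rfl) hn
      · exact hl
  le_antisymm x y hxy hyx := by
    have hx := h x
    have hy := h y
    rcases hxy with e | hl
    · exact e
    · rcases hyx with e | hl'
      · exact e.symm
      · omega

lemma IntervalRep.free {n : ℕ} {P : PartialOrder (Fin n)} {k : ℕ} {L U : Fin n → ℕ}
    (h : IntervalRep P k L U) : TwoPlusTwoFree P := by
  rintro ⟨a, b, c, d, hab, hcd, -, ⟨had, -⟩, ⟨-, hcb⟩, -⟩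
  have h1 := (h.lt_iff a b).1 hab
  have h2 := (h.lt_iff c d).1 hcd
  have h3 := mt (h.lt_iff a d).2 fun e => had (@le_of_lt _ P.toPreorder _ _ e)
  have h4 := mt (h.lt_iff c b).2 fun e => hcb (@le_of_lt _ P.toPreorder _ _ e)
  clear had hcb
  omega

/-- Every Fishburn multiset of size `n` is the multiset of intervals of a poset on `Fin n`. -/
lemma exists_rep {n k : ℕ} {S : Multiset (ℕ × ℕ)} (hF : Fish k S) (hS : S.card = n) :
    ∃ P L U, IntervalRep (n := n) P k L U ∧ code L U = S := by
  subst hS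
  obtain ⟨l, rfl⟩ := Quot.exists_rep S
  change Fish k (l : Multiset (ℕ × ℕ)) at hF
  change ∃ P L U, IntervalRep (n := l.length) P k L U ∧ code L U = (l : Multiset (ℕ × ℕ))
  have hc : code (fun x : Fin l.length => (l.get x).1) (fun x => (l.get x).2) =
      (l : Multiset (ℕ × ℕ)) := by
    simp [code]
  have hm : ∀ x, ((l.get x).1, (l.get x).2) ∈ (l : Multiset (ℕ × ℕ)) := fun x => by simp
  refine ⟨intervalOrder _ _ fun x => hF.le _ _ (hm x), _, _, ⟨fun x y => Iff.rfl,
    fun x => hF.le _ _ (hm x), fun x => hF.lt _ _ (hm x), fun j hj => ?_, fun j hj => ?_⟩, hc⟩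
  · obtain ⟨b, hb⟩ := hF.row j hj
    rw [← hc] at hb
    obtain ⟨x, hx, -⟩ := mem_code.1 hb
    exact ⟨x, hx⟩
  · obtain ⟨b, hb⟩ := hF.col j hj
    rw [← hc] at hb
    obtain ⟨x, -, hx⟩ := mem_code.1 hb
    exact ⟨x, hx⟩

/-- Two families with the same multiset of values differ by a permutation of the index set. -/
lemma exists_perm_of_map_eq {n : ℕ} {β : Type*} {f g : Fin n → β}
    (h : Finset.univ.val.map f = Finset.univ.val.map g) :
    ∃ e : Fin n ≃ Fin n, ∀ x, g (e x) = f x := by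
  classical
  have hc : ∀ c, Nonempty ({x // f x = c} ≃ {x // g x = c}) := by
    intro c
    rw [← Fintype.card_eq, Fintype.card_subtype, Fintype.card_subtype]
    have := congrArg (Multiset.countP (· = c)) h
    rwa [Multiset.countP_map, Multiset.countP_map] at this
  let e := fun c => (hc c).some
  refine ⟨((Equiv.sigmaFiberEquiv f).symm.trans (Equiv.sigmaCongrRight e)).trans
    (Equiv.sigmaFiberEquiv g), fun x => ?_⟩
  exact (e (f x) ⟨x, rfl⟩).2

lemma le_iff_of_lt_iff {n : ℕ} {P Q : PartialOrder (Fin n)} (e : Fin n ≃ Fin n)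
    (h : ∀ x y, P.lt x y ↔ Q.lt (e x) (e y)) (x y : Fin n) : P.le x y ↔ Q.le (e x) (e y) := by
  rw [@le_iff_lt_or_eq _ P, @le_iff_lt_or_eq _ Q]
  exact or_congr (h x y) e.injective.eq_iff.symm

lemma lt_iff_of_le_iff {n : ℕ} {P Q : PartialOrder (Fin n)} (e : Fin n ≃ Fin n)
    (h : ∀ x y, P.le x y ↔ Q.le (e x) (e y)) (x y : Fin n) : P.lt x y ↔ Q.lt (e x) (e y) := by
  rw [P.lt_iff_le_not_ge, Q.lt_iff_le_not_ge, h, h]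

/-- A representation can be pulled back along an isomorphism, so isomorphic posets have the same
multiset of intervals. -/
lemma code_eq_of_iso {n : ℕ} {P Q : PartialOrder (Fin n)} {k k' : ℕ} {L U L' U' : Fin n → ℕ}
    (hP : IntervalRep P k L U) (hQ : IntervalRep Q k' L' U') (e : Fin n ≃ Fin n)
    (h : ∀ x y, P.le x y ↔ Q.le (e x) (e y)) : code L U = code L' U' := by
  have hP' : IntervalRep P k' (L' ∘ e) (U' ∘ e) :=
    { lt_iff := fun x y => (lt_iff_of_le_iff e h x y).trans (hQ.lt_iff _ _)
      le := fun x => hQ.le _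
      lt := fun x => hQ.lt _
      row := fun j hj => by obtain ⟨x, hx⟩ := hQ.row j hj; exact ⟨e.symm x, by simpa using hx⟩
      col := fun j hj => by obtain ⟨x, hx⟩ := hQ.col j hj; exact ⟨e.symm x, by simpa using hx⟩ }
  obtain ⟨rfl, rfl⟩ := hP.unique hP'
  unfold code
  conv_rhs => rw [← Multiset.map_univ_val_equiv e, Multiset.map_map]
  rfl

lemma iso_of_code_eq {n : ℕ} {P Q : PartialOrder (Fin n)} {k k' : ℕ} {L U L' U' : Fin n → ℕ}
    (hP : IntervalRep P k L U) (hQ : IntervalRep Q k' L' U') (h : code L U = code L' U') :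
    ∃ e : Fin n ≃ Fin n, ∀ x y, P.le x y ↔ Q.le (e x) (e y) := by
  obtain ⟨e, he⟩ := exists_perm_of_map_eq h
  refine ⟨e, le_iff_of_lt_iff e fun x y => ?_⟩
  have hx := congrArg Prod.snd (he x)
  have hy := congrArg Prod.fst (he y)
  simp only at hx hy
  rw [hP.lt_iff, hQ.lt_iff, hx, hy]

/-- Isomorphism classes of (2+2)-free posets are equinumerous with Fishburn multisets, with matching
statistics. -/
lemma posetCount_eq (n a ℓ m : ℕ) (hn : 1 ≤ n) :
    posetCount n a ℓ m =
      Nat.card {S : Multiset (ℕ × ℕ) // Fish (a + 1) S ∧ S.card = n ∧ IsIdx (a + 1) S ℓ ∧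
        S.countP (fun p => p.1 = 0) = m} := by
  unfold posetCount
  refine Nat.card_eq_of_bijective (Quot.lift (fun P =>
    ⟨code (levelOf P.1) (upLevel P.1), ?_⟩) ?_) ⟨?_, ?_⟩
  · obtain ⟨P, hfree, ha, hl, hm⟩ := P
    have hR := rep_of_free hfree
    have hk : 0 < Nat.card (downSets P) := (levelOf_lt ⟨0, hn⟩).pos
    have hk' : Nat.card (downSets P) = a + 1 := by unfold levelsStat at ha; omega
    rw [hk'] at hR
    refine ⟨hR.fish, by simp [code], hl ▸ hR.minmax_isIdx (by omega), ?_⟩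
    exact hR.minStat_eq.symm.trans hm
  · rintro P Q ⟨e, he⟩
    exact Subtype.ext (code_eq_of_iso (rep_of_free P.2.1) (rep_of_free Q.2.1) e he)
  · rintro ⟨P⟩ ⟨Q⟩ h
    exact Quot.sound (iso_of_code_eq (rep_of_free P.2.1) (rep_of_free Q.2.1)
      (congrArg Subtype.val h))
  · rintro ⟨S, hF, hS, hI, hm⟩
    obtain ⟨P, L, U, hR, rfl⟩ := exists_rep hF hS
    refine ⟨Quot.mk _ ⟨P, hR.free, ?_, ?_, ?_⟩, Subtype.ext ?_⟩
    · rw [levelsStat, hR.card_downSets]; rfl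
    · exact (hR.minmax_isIdx (by omega)).unique hI
    · rw [hR.minStat_eq, hm]
    · obtain ⟨h1, h2⟩ := (rep_of_free hR.free).unique hR
      change code (levelOf P) (upLevel P) = code L U
      rw [h1, h2]

theorem poset_count_eq_ascent_seq_count (n a ℓ m : ℕ) (hn : 1 ≤ n) :
    posetCount n a ℓ m =
      Nat.card {l : List ℕ // IsAscentSeq l ∧ l.length = n ∧ ascents l = a ∧
        l.getLast? = some ℓ ∧ l.count 0 = m} := by
  rw [posetCount_eq n a ℓ m hn, card_ascentSeq n a ℓ m hn]
end

section
/- For every r ≥ 1, the series G_r satisfies the functional equation (v - 1 - tv(1-u))·G_r(t,u,v,z) = (v-1)·t^{r+1}·u·v·z^r + t·((v-1)z - v)·G_r(t,u,1,z) + t·u·v^2·G_r(t,uv,1,z), where G_r(t,u,1,z) is G_r with v specialized to 1, and G_r(t,uv,1,z) is G_r(t,u,1,z) with u replaced by the product uv. -/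
/-- The number of 0's to the left of the leftmost nonzero entry
(0 if there is no nonzero entry). -/
def runZeros (l : List ℕ) : ℕ :=
  if l.all (· == 0) then 0 else (l.takeWhile (· == 0)).length

open MvPowerSeries

/-- The variable `t` in `ℚ⟦t,u,v,z⟧`. -/
noncomputable def T : MvPowerSeries (Fin 4) ℚ := X 0
/-- The variable `u` in `ℚ⟦t,u,v,z⟧`. -/
noncomputable def U : MvPowerSeries (Fin 4) ℚ := X 1
/-- The variable `v` in `ℚ⟦t,u,v,z⟧`. -/
noncomputable def V : MvPowerSeries (Fin 4) ℚ := X 2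
/-- The variable `z` in `ℚ⟦t,u,v,z⟧`. -/
noncomputable def Z : MvPowerSeries (Fin 4) ℚ := X 3

/-- `G_r(t,u,v,z) = Σ_w t^{length(w)} u^{asc(w)} v^{last(w)} z^{zeros(w)}` over all ascent
sequences `w` with initial run of zeros equal to `r`. -/
noncomputable def Gr (r : ℕ) : MvPowerSeries (Fin 4) ℚ :=
  fun d => (Nat.card {l : List ℕ // IsAscentSeq l ∧ runZeros l = r ∧ l.length = d 0 ∧
    ascents l = d 1 ∧ l.getLast? = some (d 2) ∧ l.count 0 = d 3} : ℚ)

/-- `G_r(t,u,1,z)` : the series `G_r` with `v` specialized to `1`. -/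
noncomputable def GrOne (r : ℕ) : MvPowerSeries (Fin 4) ℚ :=
  fun d => if d 2 = 0 then
    (Nat.card {l : List ℕ // IsAscentSeq l ∧ runZeros l = r ∧ l.length = d 0 ∧
      ascents l = d 1 ∧ l.count 0 = d 3} : ℚ)
  else 0

/-- `G_r(t,uv,1,z)` : the series `G_r(t,u,1,z)` with `u` replaced by the product `uv`. -/
noncomputable def GrUV (r : ℕ) : MvPowerSeries (Fin 4) ℚ :=
  fun d => if d 1 = d 2 then
    (Nat.card {l : List ℕ // IsAscentSeq l ∧ runZeros l = r ∧ l.length = d 0 ∧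
      ascents l = d 1 ∧ l.count 0 = d 3} : ℚ)
  else 0

/-! ### Appending a letter to a sequence -/

theorem ascents_cons_cons (a b : ℕ) (l : List ℕ) :
    ascents (a :: b :: l) = ascents (b :: l) + if a < b then 1 else 0 := by
  simp [ascents, List.countP_cons]

theorem ascents_append (l : List ℕ) (hl : l ≠ []) (i : ℕ) :
    ascents (l ++ [i]) = ascents l + if l.getLastD 0 < i then 1 else 0 := by
  induction l with
  | nil => exact absurd rfl hl
  | cons a l ih =>
    cases l with
    | nil => simp [ascents, List.countP_cons]
    | cons b l =>
      have := ih (by simp)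
      simp only [List.cons_append, ascents_cons_cons] at this ⊢
      simp only [List.getLastD_cons] at this ⊢
      omega

theorem isAscentSeq_append (l : List ℕ) (hl : l ≠ []) (i : ℕ) :
    IsAscentSeq (l ++ [i]) ↔ IsAscentSeq l ∧ i ≤ ascents l + 1 := by
  have hpos : 0 < l.length := List.length_pos_iff.mpr hl
  constructor
  · intro h
    refine ⟨fun j hj => ?_, ?_⟩
    · have := h j (by simp; omega)
      simpa [List.getElem_append_left hj, List.take_append_of_le_length hj.le] using this
    · have := h l.length (by simp)
      simpa [hl] using this
  · rintro ⟨h, hi⟩ j hj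
    rcases Nat.lt_or_ge j l.length with hj' | hj'
    · have := h j hj'
      simpa [List.getElem_append_left hj', List.take_append_of_le_length hj'.le] using this
    · have : j = l.length := by simp at hj; omega
      subst this
      simpa [hl] using hi

/-- In an ascent sequence the last letter is at most the number of ascents. -/
theorem getLastD_le_ascents (l : List ℕ) (h : IsAscentSeq l) : l.getLastD 0 ≤ ascents l := by
  induction l using List.reverseRecOn with
  | nil => simp
  | append_singleton l i ih =>
    by_cases hl : l = []
    · subst hl
      have := h 0 (by simp)
      simpa using this.trans (Nat.zero_le _)
    · obtain ⟨h1, h2⟩ := (isAscentSeq_append l hl i).1 h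
      have := ih h1
      rw [ascents_append l hl]
      simp only [List.getLastD_concat]
      split_ifs <;> omega

/-! ### The run of initial zeros -/

theorem runZeros_of_all (l : List ℕ) (h : l.all (· == 0) = true) : runZeros l = 0 := by
  simp only [runZeros, h, if_true]

theorem runZeros_append_of_not_all (l : List ℕ) (h : ¬ l.all (· == 0) = true) (i : ℕ) :
    runZeros (l ++ [i]) = runZeros l := by
  have h2 : ¬ (l ++ [i]).all (· == 0) = true := by
    rw [List.all_append]; simp_all
  simp only [runZeros, h, h2]
  rw [List.takeWhile_append]
  have : (l.takeWhile (· == 0)).length ≠ l.length := by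
    intro h3
    apply h
    have h4 : l.takeWhile (· == 0) = l := (List.takeWhile_sublist _).eq_of_length h3
    rw [List.takeWhile_eq_self_iff] at h4
    simpa using h4
  simp [this]

theorem runZeros_replicate_append (r i : ℕ) (hi : i ≠ 0) :
    runZeros (List.replicate r 0 ++ [i]) = r := by
  have h : ¬ (List.replicate r 0 ++ [i]).all (· == 0) = true := by simp [hi]
  simp only [runZeros, h]
  simp [hi]

theorem ascents_replicate (r : ℕ) : ascents (List.replicate r 0) = 0 := by
  induction r with
  | zero => rfl
  | succ r ih =>
    cases r with
    | zero => rfl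
    | succ r =>
      simp only [List.replicate_succ, ascents_cons_cons] at ih ⊢
      simpa using ih

theorem isAscentSeq_replicate (r : ℕ) : IsAscentSeq (List.replicate r 0) := by
  intro i h
  simp

/-! ### The finite sets of words of bounded length -/

/-- All one-letter extensions of an ascent sequence. -/
def extensions (w : List ℕ) : Finset (List ℕ) :=
  (Finset.range (ascents w + 2)).image fun i => w ++ [i]

/-- The ascent sequences `w` with `runZeros w = r` and length `< N` (for `r ≥ 1`), generated from
`0^r 1` by appending letters. -/
def words (r : ℕ) : ℕ → Finset (List ℕ)
  | 0 => ∅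
  | N + 1 => (if r + 1 ≤ N then {List.replicate r 0 ++ [1]} else ∅) ∪
      (words r N).biUnion extensions

theorem mem_words (r : ℕ) (hr : 1 ≤ r) (N : ℕ) (l : List ℕ) :
    l ∈ words r N ↔ IsAscentSeq l ∧ runZeros l = r ∧ l.length < N := by
  induction N generalizing l with
  | zero => simp [words]
  | succ N ih =>
    have hrep : List.replicate r 0 ≠ [] := by simp; omega
    simp only [words, Finset.mem_union, Finset.mem_biUnion, extensions, Finset.mem_image,
      Finset.mem_range, ih]
    constructor
    · rintro (h | ⟨w, ⟨h1, h2, h3⟩, i, hi, rfl⟩)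
      · split_ifs at h with hN
        · rw [Finset.mem_singleton] at h
          subst h
          refine ⟨(isAscentSeq_append _ hrep 1).2 ⟨isAscentSeq_replicate r, by omega⟩,
            runZeros_replicate_append r 1 one_ne_zero, by simp; omega⟩
        · simp at h
      · have hall : ¬ w.all (· == 0) = true := fun h => by
          rw [runZeros_of_all w h] at h2; omega
        have hw : w ≠ [] := by rintro rfl; simp at hall
        exact ⟨(isAscentSeq_append w hw i).2 ⟨h1, by omega⟩,
          by rw [runZeros_append_of_not_all w hall, h2], by simp; omega⟩
    · rintro ⟨h1, h2, h3⟩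
      induction l using List.reverseRecOn with
      | nil => simp [runZeros] at h2; omega
      | append_singleton w i _ =>
        have hw : w ≠ [] := by
          rintro rfl
          have h4 : i ≤ 0 := by simpa using h1 0 (by simp)
          have : i = 0 := by omega
          subst this
          simp [runZeros] at h2
          omega
        obtain ⟨h4, h5⟩ := (isAscentSeq_append w hw i).1 h1
        simp only [List.length_append, List.length_singleton] at h3
        by_cases hall : w.all (· == 0) = true
        · left
          have hwr : w = List.replicate w.length 0 := by
            rw [List.eq_replicate_iff]; simpa using hall
          have hi : i ≠ 0 := by
            rintro rfl
            rw [runZeros_of_all] at h2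
            · omega
            · rw [List.all_append, hall]; simp
          rw [hwr, runZeros_replicate_append _ _ hi] at h2
          rw [hwr, ascents_replicate] at h5
          have hi1 : i = 1 := by omega
          rw [if_pos (by omega), Finset.mem_singleton, hi1, ← h2, ← hwr]
        · right
          exact ⟨w, ⟨h4, by rw [← h2, runZeros_append_of_not_all w hall], by omega⟩, i,
            by omega, rfl⟩

/-- The recursive structure of the words, as an identity of sums. -/
theorem sum_words_succ {M : Type*} [AddCommMonoid M] (r : ℕ) (hr : 1 ≤ r) (N : ℕ) (hN : r + 1 ≤ N)
    (f : List ℕ → M) :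
    ∑ w ∈ words r (N + 1), f w = f (List.replicate r 0 ++ [1]) +
      ∑ w ∈ words r N, ∑ i ∈ Finset.range (ascents w + 2), f (w ++ [i]) := by
  rw [words, if_pos hN, Finset.sum_union, Finset.sum_singleton, Finset.sum_biUnion]
  · congr 1
    refine Finset.sum_congr rfl fun w _ => ?_
    rw [extensions, Finset.sum_image]
    intro i _ j _ h
    simpa using h
  · intro w _ w' _ hne
    rw [Function.onFun, Finset.disjoint_left]
    intro l h1 h2
    simp only [extensions, Finset.mem_image] at h1 h2
    obtain ⟨i, _, rfl⟩ := h1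
    obtain ⟨j, _, h⟩ := h2
    exact hne (List.append_inj_left' h rfl).symm
  · rw [Finset.disjoint_singleton_left]
    intro h
    simp only [extensions, Finset.mem_biUnion, Finset.mem_image] at h
    obtain ⟨w, hw, i, _, h⟩ := h
    have h2 := ((mem_words r hr N w).1 hw).2.1
    rw [List.append_inj_left' h rfl, runZeros_of_all _ (by simp)] at h2
    omega

/-! ### Truncated generating functions -/

/-- The monomial of `w`, with the exponent of `v` prescribed by the statistic `p`. -/
noncomputable def wt (p : List ℕ → ℕ) (w : List ℕ) : MvPowerSeries (Fin 4) ℚ :=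
  T ^ w.length * U ^ ascents w * V ^ p w * Z ^ w.count 0

theorem coeff_wt (p : List ℕ → ℕ) (w : List ℕ) (d : Fin 4 →₀ ℕ) :
    coeff d (wt p w) = if w.length = d 0 ∧ ascents w = d 1 ∧ p w = d 2 ∧ w.count 0 = d 3
      then 1 else 0 := by
  simp only [wt, T, U, V, Z, X_pow_eq, monomial_mul_monomial, coeff_monomial, mul_one]
  congr 1
  rw [Finsupp.ext_iff]
  simp [Fin.forall_fin_succ, Finsupp.single_apply, eq_comm]

/-- The generating function of the words of length `< N`.  The statistic `p` is the last letter
for `Gr`, constantly `0` for `GrOne` (`v = 1`), and `ascents` for `GrUV` (`u ↦ uv`). -/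
noncomputable def truncGF (p : List ℕ → ℕ) (r N : ℕ) : MvPowerSeries (Fin 4) ℚ :=
  ∑ w ∈ words r N, wt p w

theorem coeff_trunc (p : List ℕ → ℕ) (r : ℕ) (hr : 1 ≤ r) (N : ℕ) (d : Fin 4 →₀ ℕ)
    (hd : d 0 < N) :
    coeff d (truncGF p r N) = (Nat.card {l : List ℕ // IsAscentSeq l ∧ runZeros l = r ∧
      l.length = d 0 ∧ ascents l = d 1 ∧ p l = d 2 ∧ l.count 0 = d 3} : ℚ) := by
  rw [truncGF, map_sum]
  simp only [coeff_wt]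
  rw [Finset.sum_boole, ← Nat.card_eq_finsetCard]
  congr 1
  apply Nat.card_congr
  refine Equiv.subtypeEquivRight fun l => ?_
  rw [Finset.mem_filter, mem_words r hr]
  constructor
  · rintro ⟨⟨h1, h2, -⟩, h⟩
    exact ⟨h1, h2, h⟩
  · rintro ⟨h1, h2, h⟩
    exact ⟨⟨h1, h2, by omega⟩, h⟩

theorem coeff_Gr (r : ℕ) (hr : 1 ≤ r) (N : ℕ) (d : Fin 4 →₀ ℕ) (hd : d 0 < N) :
    coeff d (Gr r) = coeff d (truncGF (fun l => l.getLastD 0) r N) := by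
  rw [coeff_trunc _ r hr N d hd]
  change ((Nat.card _ : ℕ) : ℚ) = _
  congr 1
  apply Nat.card_congr
  refine Equiv.subtypeEquivRight fun l => ?_
  refine and_congr_right fun _ => and_congr_right fun h => and_congr_right fun _ =>
    and_congr_right fun _ => and_congr_left fun _ => ?_
  have hl : l ≠ [] := by
    rintro rfl
    simp [runZeros] at h
    omega
  rw [List.getLastD_eq_getLast?, List.getLast?_eq_some_getLast hl]
  simp

theorem coeff_GrOne (r : ℕ) (hr : 1 ≤ r) (N : ℕ) (d : Fin 4 →₀ ℕ) (hd : d 0 < N) :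
    coeff d (GrOne r) = coeff d (truncGF (fun _ => 0) r N) := by
  rw [coeff_trunc _ r hr N d hd]
  change (if d 2 = 0 then ((Nat.card _ : ℕ) : ℚ) else 0) = _
  split_ifs with h
  · simp [h]
  · simp [Ne.symm h]

theorem coeff_GrUV (r : ℕ) (hr : 1 ≤ r) (N : ℕ) (d : Fin 4 →₀ ℕ) (hd : d 0 < N) :
    coeff d (GrUV r) = coeff d (truncGF ascents r N) := by
  rw [coeff_trunc _ r hr N d hd]
  change (if d 1 = d 2 then ((Nat.card _ : ℕ) : ℚ) else 0) = _
  split_ifs with h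
  · congr 1
    apply Nat.card_congr
    refine Equiv.subtypeEquivRight fun l => ?_
    rw [h]
    tauto
  · have : IsEmpty {l : List ℕ // IsAscentSeq l ∧ runZeros l = r ∧
      l.length = d 0 ∧ ascents l = d 1 ∧ ascents l = d 2 ∧ l.count 0 = d 3} :=
      ⟨fun ⟨l, _, _, _, h1, h2, _⟩ => h (h1.symm.trans h2)⟩
    simp

/-- Agreement in `t`-degrees `< N` is preserved by multiplication. -/
theorem coeff_mul_congr (P F G : MvPowerSeries (Fin 4) ℚ) (N : ℕ)
    (h : ∀ d : Fin 4 →₀ ℕ, d 0 < N → coeff d F = coeff d G) (d : Fin 4 →₀ ℕ) (hd : d 0 < N) :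
    coeff d (P * F) = coeff d (P * G) := by
  rw [coeff_mul, coeff_mul]
  refine Finset.sum_congr rfl fun x hx => ?_
  have hx' := Finset.HasAntidiagonal.mem_antidiagonal.1 hx
  rw [h x.2]
  have : d 0 = x.1 0 + x.2 0 := by rw [← hx']; rfl
  omega

/-! ### The kernel computation -/

/-- `(v - 1)(z + (v + ⋯ + v^ℓ) + u (v^{ℓ+1} + ⋯ + v^{a+1}))` in closed form. -/
theorem kernel_sum {R : Type*} [CommRing R] (u v z : R) (l a : ℕ) (h : l ≤ a) :
    (v - 1) * ∑ i ∈ Finset.range (a + 2),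
        (if l < i then u else 1) * v ^ i * (if i = 0 then z else 1) =
      (v - 1) * z - v + v * (1 - u) * v ^ l + u * v ^ 2 * v ^ a := by
  -- The upper part of the sum is peeled off by induction on `a`, the lower one by induction on `l`.
  induction a, h using Nat.le_induction with
  | base =>
    have low : ∀ m, m ≤ l → (v - 1) * ∑ i ∈ Finset.range (m + 1),
        (if l < i then u else 1) * v ^ i * (if i = 0 then z else 1) =
        (v - 1) * z - v + v ^ (m + 1) := by
      intro m
      induction m with
      | zero => intro _; simp
      | succ m ih =>
        intro hm
        rw [Finset.sum_range_succ, mul_add, ih (by omega), if_neg (by omega), if_neg (by omega)]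
        ring
    rw [Finset.sum_range_succ, mul_add, low l le_rfl, if_pos (by omega), if_neg (by omega)]
    ring
  | succ a ha ih =>
    rw [Finset.sum_range_succ, mul_add, ih, if_pos (by omega), if_neg (by omega)]
    ring

theorem wt_append (w : List ℕ) (hw : w ≠ []) (i : ℕ) :
    wt (fun l => l.getLastD 0) (w ++ [i]) = T * wt (fun _ => 0) w *
      ((if w.getLastD 0 < i then U else 1) * V ^ i * (if i = 0 then Z else 1)) := by
  simp only [wt, ascents_append w hw, List.length_append, List.getLastD_concat, List.count_append]
  by_cases h0 : i = 0
  · subst h0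
    simp
    ring
  · split_ifs <;> simp [h0] <;> ring

theorem wt_base (r : ℕ) (hr : 1 ≤ r) :
    wt (fun l => l.getLastD 0) (List.replicate r 0 ++ [1]) = T ^ (r + 1) * U * V * Z ^ r := by
  have hrep : List.replicate r 0 ≠ [] := by simp; omega
  have hlast : (List.replicate r 0).getLastD 0 = 0 := by
    have := getLastD_le_ascents _ (isAscentSeq_replicate r)
    rw [ascents_replicate] at this
    omega
  simp only [wt, ascents_append _ hrep, hlast, ascents_replicate, List.getLastD_concat,
    List.count_append]
  simp

/-- The functional equation for the truncated generating functions. -/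
theorem truncated_equation (r : ℕ) (hr : 1 ≤ r) (N : ℕ) (hN : r + 1 ≤ N) :
    (V - 1) * truncGF (fun l => l.getLastD 0) r (N + 1) =
      (V - 1) * (T ^ (r + 1) * U * V * Z ^ r)
        + T * V * (1 - U) * truncGF (fun l => l.getLastD 0) r N
        + T * ((V - 1) * Z - V) * truncGF (fun _ => 0) r N
        + T * U * V ^ 2 * truncGF ascents r N := by
  simp only [truncGF]
  rw [sum_words_succ r hr N hN, wt_base r hr, mul_add, add_assoc, add_assoc]
  congr 1
  simp only [Finset.mul_sum (words r N), ← Finset.sum_add_distrib]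
  refine Finset.sum_congr rfl fun w hw => ?_
  obtain ⟨h1, h2, -⟩ := (mem_words r hr N w).1 hw
  have hne : w ≠ [] := by
    rintro rfl
    simp [runZeros] at h2
    omega
  simp only [wt_append w hne]
  rw [← Finset.mul_sum, mul_left_comm, kernel_sum _ _ _ _ _ (getLastD_le_ascents w h1)]
  simp only [wt]
  ring

theorem Gr_functional_equation (r : ℕ) (hr : 1 ≤ r) :
    (V - 1 - T * V * (1 - U)) * Gr r =
      (V - 1) * T ^ (r + 1) * U * V * Z ^ r
        + T * ((V - 1) * Z - V) * GrOne r
        + T * U * V ^ 2 * GrUV r := by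
  ext d
  -- `N` exceeds the `t`-degree of `d` and is at least the length `r + 1` of the shortest word.
  obtain ⟨N, hN, hd⟩ : ∃ N, r + 1 ≤ N ∧ d 0 < N := ⟨r + 1 + d 0, by omega, by omega⟩
  have key := congrArg (coeff d) (truncated_equation r hr N hN)
  simp only [map_add] at key
  rw [← coeff_mul_congr _ _ _ (N + 1) (coeff_Gr r hr (N + 1)) d (by omega),
    ← coeff_mul_congr _ _ _ N (coeff_Gr r hr N) d hd,
    ← coeff_mul_congr _ _ _ N (coeff_GrOne r hr N) d hd,
    ← coeff_mul_congr _ _ _ N (coeff_GrUV r hr N) d hd] at key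
  rw [sub_mul, map_sub, key]
  simp only [map_add, mul_assoc]
  ring
end
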